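/- For the binomial random tree model σ_{bin,p} with p ∈ (0,1), the expected height satisfies E(H_{n,σ_{bin,p}}) ≤ c_p·log₂(n)·(1+o(1)) for every constant c_p > 2·max{1/log₂(1/p), 1/log₂(1/(1−p))}. -/

import Mathlib

inductive BTree
  | leaf : BTree
  | node : BTree → BTree → BTree
deriving DecidableEq

def BTree.size : BTree → ℕ
  | .leaf => 1
  | .node l r => l.size + r.size

def BTree.height : BTree → ℕ
  | .leaf => 0
  | .node l r => 1 + max l.height r.height

noncomputable def Pσ (σ : ℕ → ℕ → ℝ) : BTree → ℝ
  | .leaf => 1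
  | .node l r => σ l.size r.size * Pσ σ l * Pσ σ r

def trees : ℕ → Finset BTree
  | 0 => ∅
  | 1 => {BTree.leaf}
  | (n+2) => (Finset.Ico 1 (n+2)).attach.biUnion
      (fun k => ((trees k.1) ×ˢ (trees (n+2-k.1))).image (fun p => BTree.node p.1 p.2))
  decreasing_by
  · exact (Finset.mem_Ico.mp k.2).2
  · have h := (Finset.mem_Ico.mp k.2).1; omega

noncomputable def expPow (σ : ℕ → ℕ → ℝ) (φ : ℝ) (n : ℕ) : ℝ :=
  ∑ t ∈ trees n, Pσ σ t * φ ^ t.height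

noncomputable def expH (σ : ℕ → ℕ → ℝ) (n : ℕ) : ℝ :=
  ∑ t ∈ trees n, Pσ σ t * (t.height : ℝ)

open Filter Asymptotics

/-- The binomial random tree model: σ_{bin,p}(i, j) = p^{i−1}(1−p)^{j−1}·C(i+j−2, i−1). -/
noncomputable def σbin (p : ℝ) (i j : ℕ) : ℝ :=
  p ^ (i - 1) * (1 - p) ^ (j - 1) * ((i + j - 2).choose (i - 1))

theorem trees_size : ∀ (n : ℕ) (t : BTree), t ∈ trees n → t.size = n := by
  intro n
  induction n using Nat.strong_induction_on with
  | _ n ih =>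
    intro t ht
    match n, ih, ht with
    | 0, ih, ht => simp [trees] at ht
    | 1, ih, ht => 
      simp [trees] at ht
      subst ht
      rfl
    | (n+2), ih, ht =>
      rw [trees] at ht
      simp only [Finset.mem_biUnion, Finset.mem_image, Finset.mem_product] at ht
      obtain ⟨⟨k, hk⟩, -, ⟨l, r⟩, ⟨hl, hr⟩, rfl⟩ := ht
      have hk' := Finset.mem_Ico.mp hk
      have h1 := ih k hk'.2 l hl
      have h2 := ih (n+2-k) (by omega) r hr
      simp only [BTree.size, h1, h2]
      omega

theorem sum_trees (n : ℕ) (F : BTree → ℝ) :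
    ∑ t ∈ trees (n+2), F t = ∑ j ∈ Finset.range (n+1),
      ∑ l ∈ trees (j+1), ∑ r ∈ trees (n-j+1), F (BTree.node l r) := by
  have h1 : ∑ t ∈ trees (n+2), F t = ∑ k ∈ Finset.Ico 1 (n+2),
      ∑ l ∈ trees k, ∑ r ∈ trees (n+2-k), F (BTree.node l r) := by
    rw [trees, Finset.sum_biUnion]
    · rw [← Finset.sum_attach (Finset.Ico 1 (n+2))]
      refine Finset.sum_congr rfl fun k _ => ?_
      rw [Finset.sum_image, Finset.sum_product]
      rintro ⟨a, b⟩ _ ⟨c, d⟩ _ h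
      simpa using h
    · intro a _ b _ hab
      rw [Function.onFun, Finset.disjoint_left]
      intro t ht ht'
      simp only [Finset.mem_image, Finset.mem_product] at ht ht'
      obtain ⟨⟨l, r⟩, ⟨hl, hr⟩, rfl⟩ := ht
      obtain ⟨⟨l', r'⟩, ⟨hl', hr'⟩, h⟩ := ht'
      simp only [BTree.node.injEq] at h
      apply hab
      apply Subtype.ext
      rw [← trees_size _ _ hl, ← trees_size _ _ hl', h.1]
  rw [h1, Finset.sum_Ico_eq_sum_range]
  refine Finset.sum_congr rfl fun j hj => ?_
  have hj := Finset.mem_range.mp hj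
  rw [show 1 + j = j + 1 by omega, show n + 2 - (j+1) = n - j + 1 by omega]

noncomputable def bw (p : ℝ) (n j : ℕ) : ℝ := (n.choose j) * p ^ j * (1 - p) ^ (n - j)

theorem sigma_eq (p : ℝ) (n j : ℕ) (hj : j ∈ Finset.range (n+1)) :
    σbin p (j+1) (n-j+1) = bw p n j := by
  have hj := Finset.mem_range.mp hj
  unfold σbin bw
  rw [show j + 1 + (n - j + 1) - 2 = n by omega]
  simp only [Nat.add_sub_cancel]
  ring

theorem bw_nonneg {p : ℝ} (hp0 : 0 < p) (hp1 : p < 1) (n j : ℕ) : 0 ≤ bw p n j := by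
  have : 0 < 1 - p := by linarith
  unfold bw; positivity

theorem bw_sum (p : ℝ) (n : ℕ) : ∑ j ∈ Finset.range (n+1), bw p n j = 1 := by
  have := add_pow p (1-p) n
  simp only [add_sub_cancel, one_pow] at this
  rw [this]
  refine Finset.sum_congr rfl fun j _ => ?_
  unfold bw; ring

theorem bw_eval (p : ℝ) (n j : ℕ) : (bernsteinPolynomial ℝ n j).eval p = bw p n j := by
  simp [bernsteinPolynomial, bw]

theorem bw_mom (p : ℝ) (n : ℕ) :
    ∑ j ∈ Finset.range (n+1), bw p n j * ((j:ℝ) * (j - 1)) = p^2 * ((n:ℝ) * (n - 1)) := by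
  have := congrArg (Polynomial.eval p) (bernsteinPolynomial.sum_mul_smul ℝ n)
  rw [Polynomial.eval_finsetSum] at this
  simp only [nsmul_eq_mul, Polynomial.eval_mul, Polynomial.eval_natCast, bw_eval, Polynomial.eval_pow, Polynomial.eval_X] at this
  have hc : ∀ m : ℕ, ((m * (m - 1) : ℕ) : ℝ) = (m:ℝ) * (m - 1) := by
    intro m; cases m <;> simp
  simp only [hc] at this
  rw [mul_comm (p^2), ← this]
  refine Finset.sum_congr rfl fun j _ => ?_
  ring

theorem bw_mom' (p : ℝ) (n : ℕ) :
    ∑ j ∈ Finset.range (n+1), bw p n j * (((n-j:ℕ):ℝ) * ((n-j:ℕ) - 1))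
      = (1-p)^2 * ((n:ℝ) * (n - 1)) := by
  rw [← bw_mom (1-p) n, ← Finset.sum_range_reflect]
  refine Finset.sum_congr rfl fun j hj => ?_
  have hj := Finset.mem_range.mp hj
  rw [show n + 1 - 1 - j = n - j by omega, show n - (n - j) = j by omega]
  unfold bw
  rw [show n - (n - j) = j by omega, Nat.choose_symm (by omega)]
  ring

theorem sum_P (p : ℝ) (n : ℕ) (F : BTree → ℝ) :
    ∑ t ∈ trees (n+2), Pσ (σbin p) t * F t = ∑ j ∈ Finset.range (n+1), bw p n j *
      ∑ l ∈ trees (j+1), ∑ r ∈ trees (n-j+1),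
        Pσ (σbin p) l * Pσ (σbin p) r * F (BTree.node l r) := by
  rw [sum_trees]
  refine Finset.sum_congr rfl fun j hj => ?_
  rw [Finset.mul_sum]
  refine Finset.sum_congr rfl fun l hl => ?_
  rw [Finset.mul_sum]
  refine Finset.sum_congr rfl fun r hr => ?_
  rw [Pσ, trees_size _ _ hl, trees_size _ _ hr, sigma_eq p n j hj]
  ring

theorem P_nonneg {p : ℝ} (hp0 : 0 < p) (hp1 : p < 1) (t : BTree) : 0 ≤ Pσ (σbin p) t := by
  have : 0 < 1 - p := by linarith
  induction t with
  | leaf => simp [Pσ]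
  | node l r h1 h2 => 
    rw [Pσ]
    unfold σbin
    positivity

theorem P_sum (p : ℝ) (n : ℕ) : ∑ t ∈ trees (n+1), Pσ (σbin p) t = 1 := by
  induction n using Nat.strong_induction_on with
  | _ n ih =>
    match n, ih with
    | 0, ih => simp [trees, Pσ]
    | (n+1), ih =>
      have h := sum_P p n (fun _ => 1)
      simp only [mul_one] at h
      rw [h, ← bw_sum p n]
      refine Finset.sum_congr rfl fun j hj => ?_
      have hj := Finset.mem_range.mp hj
      rw [← Finset.sum_mul_sum, ih j (by omega), ih (n-j) (by omega)]
      ring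

theorem expPow_le {p : ℝ} (hp0 : 0 < p) (hp1 : p < 1) {φ : ℝ} (h1 : 1 ≤ φ)
    (h2 : φ * (p^2 + (1-p)^2) ≤ 1) (n : ℕ) :
    expPow (σbin p) φ (n+1) ≤ φ^2 * ((n:ℝ) * (n-1)) + φ := by
  induction n using Nat.strong_induction_on with
  | _ n ih =>
    match n, ih with
    | 0, ih => simpa [trees, Pσ, expPow, BTree.height] using h1
    | 1, ih => 
      unfold expPow
      rw [sum_P p 0]
      simp [trees, Pσ, BTree.height, bw]
    | (n+2), ih =>
      unfold expPow
      rw [sum_P p (n+1)]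
      have key : ∀ j ∈ Finset.range (n+1+1), bw p (n+1) j * 
          ∑ l ∈ trees (j+1), ∑ r ∈ trees (n+1-j+1),
          Pσ (σbin p) l * Pσ (σbin p) r * φ ^ (BTree.node l r).height ≤
          bw p (n+1) j * (φ * ((φ^2 * ((j:ℝ) * (j-1)) + φ) + 
            (φ^2 * (((n+1-j:ℕ):ℝ) * ((n+1-j:ℕ)-1)) + φ))) := by
        intro j hj
        have hj := Finset.mem_range.mp hj
        refine mul_le_mul_of_nonneg_left ?_ (bw_nonneg hp0 hp1 _ _)
        have e1 := ih j (by omega)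
        have e2 := ih (n+1-j) (by omega)
        calc _ ≤ ∑ l ∈ trees (j+1), ∑ r ∈ trees (n+1-j+1),
              (φ * ((Pσ (σbin p) l * φ ^ l.height) * Pσ (σbin p) r) +
               φ * (Pσ (σbin p) l * (Pσ (σbin p) r * φ ^ r.height))) := by
              refine Finset.sum_le_sum fun l _ => Finset.sum_le_sum fun r _ => ?_
              have a := P_nonneg hp0 hp1 l
              have b := P_nonneg hp0 hp1 r
              have c : φ ^ (BTree.node l r).height ≤ φ * (φ ^ l.height + φ ^ r.height) := by
                rw [BTree.height, pow_add, pow_one]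
                refine mul_le_mul_of_nonneg_left ?_ (by linarith)
                have x1 : 0 < φ ^ l.height := by positivity
                have x2 : 0 < φ ^ r.height := by positivity
                rcases max_choice l.height r.height with h | h <;> rw [h] <;> linarith
              calc _ ≤ Pσ (σbin p) l * Pσ (σbin p) r * (φ * (φ ^ l.height + φ ^ r.height)) :=
                    mul_le_mul_of_nonneg_left c (mul_nonneg a b)
                _ = _ := by ring
          _ = φ * (expPow (σbin p) φ (j+1) + expPow (σbin p) φ (n+1-j+1)) := by
              simp only [Finset.sum_add_distrib, ← Finset.mul_sum]
              simp only [P_sum, mul_one, ← Finset.sum_mul, one_mul]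
              unfold expPow
              ring
          _ ≤ _ := mul_le_mul_of_nonneg_left (add_le_add e1 e2) (by linarith)
      refine (Finset.sum_le_sum key).trans ?_
      have m0 := bw_sum p (n+1)
      have m1 := bw_mom p (n+1)
      have m2 := bw_mom' p (n+1)
      have e : ∑ j ∈ Finset.range (n+1+1), bw p (n+1) j * (φ * ((φ^2 * ((j:ℝ) * (j-1)) + φ) + 
            (φ^2 * (((n+1-j:ℕ):ℝ) * ((n+1-j:ℕ)-1)) + φ))) = 
            φ^3 * (p^2 * (((n+1:ℕ):ℝ) * ((n+1:ℕ) - 1))) 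
            + φ^3 * ((1-p)^2 * (((n+1:ℕ):ℝ) * ((n+1:ℕ) - 1))) + 2 * φ^2 * 1 := by
        rw [← m1, ← m2, ← m0, Finset.mul_sum, Finset.mul_sum, Finset.mul_sum,
          ← Finset.sum_add_distrib, ← Finset.sum_add_distrib]
        refine Finset.sum_congr rfl fun j _ => ?_
        rw [m0]
        ring
      rw [e]
      push_cast
      have hn : (0:ℝ) ≤ n := Nat.cast_nonneg n
      have h3 : φ^2 * (((n:ℝ)+1) * n) * (φ * (p^2 + (1-p)^2)) ≤ φ^2 * (((n:ℝ)+1) * n) * 1 :=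
        mul_le_mul_of_nonneg_left h2 (by positivity)
      have h4 : 0 ≤ φ^2 * n := by positivity
      nlinarith

theorem expH_le {p : ℝ} (hp0 : 0 < p) (hp1 : p < 1) {φ : ℝ} (h1 : 1 < φ)
    (h2 : φ * (p^2 + (1-p)^2) ≤ 1) (n : ℕ) (hn : 1 ≤ n) :
    expH (σbin p) n * Real.log φ ≤ 2 * Real.log n + Real.log (2 * φ^2) := by
  obtain ⟨m, rfl⟩ : ∃ m, n = m + 1 := ⟨n-1, by omega⟩
  set K : ℝ := 2 * φ^2 * ((m+1:ℕ):ℝ)^2 with hK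
  have hm : (0:ℝ) ≤ m := Nat.cast_nonneg m
  have hKpos : 0 < K := by positivity
  have hE : expPow (σbin p) φ (m+1) ≤ K := by
    refine (expPow_le hp0 hp1 h1.le h2 m).trans ?_
    rw [hK]; push_cast
    have : 0 ≤ φ^2 * m := by positivity
    have : 0 ≤ φ^2 * m^2 := by positivity
    nlinarith
  have hlogK : Real.log K = 2 * Real.log ((m+1:ℕ):ℝ) + Real.log (2 * φ^2) := by
    rw [hK, Real.log_mul (by positivity) (by positivity), Real.log_pow]
    push_cast; ring
  rw [← hlogK]
  calc expH (σbin p) (m+1) * Real.log φ 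
      = ∑ t ∈ trees (m+1), Pσ (σbin p) t * (t.height * Real.log φ) := by
        unfold expH
        rw [Finset.sum_mul]
        exact Finset.sum_congr rfl fun t _ => by ring
    _ ≤ ∑ t ∈ trees (m+1), ((Pσ (σbin p) t * φ ^ t.height) * K⁻¹ + Pσ (σbin p) t * (Real.log K - 1)) := by
        refine Finset.sum_le_sum fun t _ => ?_
        have a := P_nonneg hp0 hp1 t
        have hp : 0 < φ ^ t.height := by positivity
        have := Real.log_le_sub_one_of_pos (div_pos hp hKpos)
        rw [Real.log_div hp.ne' hKpos.ne', Real.log_pow, div_eq_mul_inv] at this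
        calc _ ≤ Pσ (σbin p) t * (φ ^ t.height * K⁻¹ + (Real.log K - 1)) :=
              mul_le_mul_of_nonneg_left (by linarith) a
          _ = _ := by ring
    _ = expPow (σbin p) φ (m+1) * K⁻¹ + (Real.log K - 1) := by
        rw [Finset.sum_add_distrib, ← Finset.sum_mul, ← Finset.sum_mul, P_sum, one_mul]
        rfl
    _ ≤ K * K⁻¹ + (Real.log K - 1) := by
        gcongr
    _ = Real.log K := by rw [mul_inv_cancel₀ hKpos.ne']; ring

theorem binomial_aux {p : ℝ} (hp0 : 0 < p) (hp1 : p < 1) {φ : ℝ} (h1 : 1 < φ)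
    (h2 : φ * (p^2 + (1-p)^2) ≤ 1) (cp : ℝ) (hcp : 2 * (Real.logb 2 φ)⁻¹ < cp) :
    ∀ᶠ n : ℕ in Filter.atTop, expH (σbin p) n ≤ cp * Real.logb 2 n := by
  have hl : 0 < Real.log φ := Real.log_pos h1
  have h2l : 0 < Real.log 2 := Real.log_pos (by norm_num)
  have hd : 0 < cp * Real.log φ / Real.log 2 - 2 := by
    have : 2 * (Real.logb 2 φ)⁻¹ * (Real.log φ / Real.log 2) < cp * (Real.log φ / Real.log 2) :=
      mul_lt_mul_of_pos_right hcp (by positivity)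
    rw [Real.logb, mul_assoc, inv_mul_cancel₀ (by positivity)] at this
    rw [mul_div_assoc]
    linarith
  have ht := ((Real.tendsto_log_atTop.comp tendsto_natCast_atTop_atTop).const_mul_atTop hd
    : Filter.Tendsto (fun n : ℕ => _) Filter.atTop Filter.atTop)
  filter_upwards [ht.eventually_ge_atTop (Real.log (2 * φ^2)), Filter.eventually_ge_atTop 1] with n hn hn1
  have := expH_le hp0 hp1 h1 h2 n hn1
  simp only [Function.comp] at hn
  refine le_of_mul_le_mul_right (this.trans ?_) hl
  have e : cp * Real.logb 2 n * Real.log φ = cp * Real.log φ / Real.log 2 * Real.log n := by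
    rw [Real.logb]; ring
  rw [e]
  linarith

theorem binomial_model_expected_height (p : ℝ) (hp0 : 0 < p) (hp1 : p < 1)
    (cp : ℝ)
    (hcp : 2 * max (Real.logb 2 (1 / p))⁻¹ (Real.logb 2 (1 / (1 - p)))⁻¹ < cp) :
    ∃ g : ℕ → ℝ, g =o[atTop] (fun _ => (1 : ℝ)) ∧
      ∀ᶠ n : ℕ in atTop,
        expH (σbin p) n ≤ cp * Real.logb 2 n * (1 + g n) := by
  refine ⟨fun _ => 0, Asymptotics.isLittleO_zero _ _, ?_⟩
  simp only [add_zero, mul_one]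
  have hq : 0 < 1 - p := by linarith
  rcases le_total p (1-p) with h | h
  · refine binomial_aux hp0 hp1 (φ := 1/(1-p)) ?_ ?_ cp ?_
    · rw [lt_div_iff₀ hq]; linarith
    · rw [div_mul_eq_mul_div, div_le_one hq]; nlinarith
    · exact lt_of_le_of_lt (mul_le_mul_of_nonneg_left (le_max_right _ _) (by norm_num)) hcp
  · refine binomial_aux hp0 hp1 (φ := 1/p) ?_ ?_ cp ?_
    · rw [lt_div_iff₀ hp0]; linarith
    · rw [div_mul_eq_mul_div, div_le_one hp0]; nlinarith
    · exact lt_of_le_of_lt (mul_le_mul_of_nonneg_left (le_max_left _ _) (by norm_num)) hcp
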